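/- Let Y, D, and X₁,…,X_m be random variables with finite ranges on a common probability space such that for every subset S ⊆ {1,…,m} the variables (X_j)_{j∈S} are conditionally independent given (Y, D), i.e., P(X_S | Y, D) = ∏_{j∈S} P(X_j | Y, D). Then the set function F(S) = I(Y; X_S | D) is submodular: for all subsets S ⊆ T ⊆ {1,…,m} and every j ∉ T, F(S ∪ {j}) − F(S) ≥ F(T ∪ {j}) − F(T). -/

import Mathlib

open MeasureTheory ProbabilityTheory

/-- Shannon entropy (in nats) of a discrete random variable `X`:
`H(X) = ∑ₐ -P(X = a) log P(X = a)`, with the convention `0 log 0 = 0`. -/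
noncomputable def shannonEntropy {Ω : Type*} [MeasureSpace Ω] {A : Type*}
    (X : Ω → A) : ℝ :=
  ∑' a : A, Real.negMulLog ((ℙ {ω | X ω = a}).toReal)

/-- Shannon mutual information of discrete random variables:
`I(X;Y) = H(X) + H(Y) - H(X,Y)`. -/
noncomputable def mutualInfo {Ω : Type*} [MeasureSpace Ω] {A B : Type*}
    (X : Ω → A) (Y : Ω → B) : ℝ :=
  shannonEntropy X + shannonEntropy Y - shannonEntropy (fun ω => (X ω, Y ω))

/-- Conditional mutual information of discrete random variables:
`I(X;Y|Z) = H(X,Z) + H(Y,Z) - H(X,Y,Z) - H(Z)`. -/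
noncomputable def condMutualInfo {Ω : Type*} [MeasureSpace Ω] {A B C : Type*}
    (X : Ω → A) (Y : Ω → B) (Z : Ω → C) : ℝ :=
  shannonEntropy (fun ω => (X ω, Z ω)) + shannonEntropy (fun ω => (Y ω, Z ω))
    - shannonEntropy (fun ω => (X ω, Y ω, Z ω)) - shannonEntropy Z

/-- Conditional entropy of discrete random variables: `H(X|Z) = H(X,Z) - H(Z)`. -/
noncomputable def condEntropy {Ω : Type*} [MeasureSpace Ω] {A C : Type*}
    (X : Ω → A) (Z : Ω → C) : ℝ :=
  shannonEntropy (fun ω => (X ω, Z ω)) - shannonEntropy Z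

/-- The error indicator of a prediction `X` against the label `Y`:
`E = 1` if `X ≠ Y` and `E = 0` otherwise. -/
def errInd {Ω : Type*} (Y X : Ω → ℤ) (ω : Ω) : ℕ :=
  if X ω ≠ Y ω then 1 else 0

/-!
Writing `U = X_j`, `V = X_T` and `W = X_S`, the increment of `F` at `T` is
`I(Y; U, V | D) - I(Y; V | D) = H(U | V, D) - H(U | V, Y, D)`.
Conditional independence given `(Y, D)` turns the last term into `H(U | Y, D)`, which no longer
depends on `T`, and `H(U | V, D) ≤ H(U | W, D)` because `W` is a function of `V`.
Both facts about conditional entropy come from writing `I(X; Y | Z)` as the relative entropy of the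
joint law with respect to `P(x, z) P(y, z) / P(z)`.
-/

section MassFun

variable {Ω : Type*} [MeasureSpace Ω] {A B C : Type*}

/-- The probability mass function `a ↦ P(X = a)` of a discrete random variable `X`, with real
values. -/
noncomputable def massFun (X : Ω → A) (a : A) : ℝ :=
  (ℙ (X ⁻¹' {a})).toReal

theorem massFun_nonneg (X : Ω → A) (a : A) : 0 ≤ massFun X a :=
  ENNReal.toReal_nonneg

theorem massFun_comp_of_injective (X : Ω → A) {f : A → B} (hf : Function.Injective f) (a : A) :
    massFun (fun ω => f (X ω)) (f a) = massFun X a := by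
  unfold massFun
  congr 2
  ext ω
  exact hf.eq_iff

theorem massFun_eq_zero_of_notMem_range {X : Ω → A} {a : A} (ha : a ∉ Set.range X) :
    massFun X a = 0 := by
  rw [massFun, Set.preimage_singleton_eq_empty.2 ha, measure_empty, ENNReal.toReal_zero]

variable [IsFiniteMeasure (ℙ : Measure Ω)]

theorem massFun_le_massFun_comp (X : Ω → A) (f : A → B) (a : A) :
    massFun X a ≤ massFun (fun ω => f (X ω)) (f a) :=
  measureReal_mono fun _ hω => congrArg f hω

variable [MeasurableSpace C] [MeasurableSingletonClass C]

theorem massFun_prodMk_eq_cond_mul (X : Ω → A) {Z : Ω → C} (hZ : Measurable Z) (a : A) (z : C) :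
    massFun (fun ω => (X ω, Z ω)) (a, z) =
      (ℙ[|Z ⁻¹' {z}] (X ⁻¹' {a})).toReal * massFun Z z := by
  rw [massFun, massFun, ← ENNReal.toReal_mul, cond_mul_eq_inter (hZ (measurableSet_singleton z)),
    ← Set.singleton_prod_singleton, Set.mk_preimage_prod, Set.inter_comm]

variable [MeasurableSpace A] [MeasurableSingletonClass A]

theorem massFun_comp [Fintype A] [DecidableEq B] {X : Ω → A} (hX : Measurable X) (f : A → B)
    (b : B) : massFun (fun ω => f (X ω)) b = ∑ a with f a = b, massFun X a := by
  calc massFun (fun ω => f (X ω)) b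
      = Measure.real ℙ (X ⁻¹' ↑({a | f a = b} : Finset A)) := by
        rw [Finset.coe_filter_univ]
        rfl
    _ = ∑ a with f a = b, massFun X a :=
        (sum_measureReal_preimage_singleton _ fun a _ => hX (measurableSet_singleton a)).symm

theorem sum_massFun [Fintype A] {X : Ω → A} (hX : Measurable X) :
    ∑ a, massFun X a = Measure.real ℙ (Set.univ : Set Ω) := by
  rw [← Set.preimage_univ (f := X), ← Finset.coe_univ]
  exact sum_measureReal_preimage_singleton _ fun a _ => hX (measurableSet_singleton a)

theorem sum_massFun_prodMk [Fintype A] [Finite C] {X : Ω → A} {Z : Ω → C}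
    (hX : Measurable X) (hZ : Measurable Z) (z : C) :
    ∑ a, massFun (fun ω => (X ω, Z ω)) (a, z) = massFun Z z := by
  classical
  have := Fintype.ofFinite C
  rw [massFun_comp (hX.prodMk hZ) Prod.snd z, Finset.sum_filter, Fintype.sum_prod_type]
  simp only [Finset.sum_ite_eq', Finset.mem_univ, if_true]

end MassFun

section Entropy

variable {Ω : Type*} [MeasureSpace Ω] {A B : Type*}

theorem shannonEntropy_comp_of_injective (X : Ω → A) {f : A → B} (hf : Function.Injective f) :
    shannonEntropy (fun ω => f (X ω)) = shannonEntropy X := by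
  have hsupp : (fun b => Real.negMulLog (massFun (fun ω => f (X ω)) b)).support ⊆ Set.range f := by
    refine Function.support_subset_iff'.2 fun b hb => ?_
    rw [massFun_eq_zero_of_notMem_range fun ⟨ω, hω⟩ => hb ⟨X ω, hω⟩, Real.negMulLog_zero]
  calc shannonEntropy (fun ω => f (X ω))
      = ∑' a, Real.negMulLog (massFun (fun ω => f (X ω)) (f a)) := (hf.tsum_eq hsupp).symm
    _ = shannonEntropy X := by
        simp only [massFun_comp_of_injective X hf]
        rfl

theorem shannonEntropy_comp_eq_neg_sum [IsFiniteMeasure (ℙ : Measure Ω)] [Fintype A]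
    [MeasurableSpace A] [MeasurableSingletonClass A] {X : Ω → A} (hX : Measurable X) (f : A → B) :
    shannonEntropy (fun ω => f (X ω)) =
      -∑ a, massFun X a * Real.log (massFun (fun ω => f (X ω)) (f a)) := by
  classical
  have hsupp (b : B) (hb : b ∉ Finset.univ.image f) :
      Real.negMulLog (massFun (fun ω => f (X ω)) b) = 0 := by
    rw [massFun_eq_zero_of_notMem_range, Real.negMulLog_zero]
    rintro ⟨ω, rfl⟩
    exact hb (Finset.mem_image_of_mem f (Finset.mem_univ _))
  calc shannonEntropy (fun ω => f (X ω))
      = ∑ b ∈ Finset.univ.image f, Real.negMulLog (massFun (fun ω => f (X ω)) b) :=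
        tsum_eq_sum hsupp
    _ = ∑ b ∈ Finset.univ.image f, ∑ a with f a = b,
          -(massFun X a * Real.log (massFun (fun ω => f (X ω)) (f a))) := by
        refine Finset.sum_congr rfl fun b _ => ?_
        rw [Real.negMulLog, neg_mul]
        nth_rw 1 [massFun_comp hX]
        rw [Finset.sum_mul, ← Finset.sum_neg_distrib]
        exact Finset.sum_congr rfl fun a ha => by rw [(Finset.mem_filter.1 ha).2]
    _ = -∑ a, massFun X a * Real.log (massFun (fun ω => f (X ω)) (f a)) := by
        rw [Finset.sum_fiberwise_of_maps_to fun a ha => Finset.mem_image_of_mem f ha,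
          Finset.sum_neg_distrib]

end Entropy

section CondProdMass

variable {Ω : Type*} [MeasureSpace Ω] {A B C : Type*}

/-- The mass function `P(x, z) P(y, z) / P(z)` of the coupling of `X`, `Y` and `Z` with the same
laws of `(X, Z)` and `(Y, Z)` in which `X` and `Y` are conditionally independent given `Z`.
Where `P(z) = 0`, division by zero gives the intended value `0`. -/
noncomputable def condProdMass (X : Ω → A) (Y : Ω → B) (Z : Ω → C) (w : A × B × C) : ℝ :=
  massFun (fun ω => (X ω, Z ω)) (w.1, w.2.2) * massFun (fun ω => (Y ω, Z ω)) w.2 /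
    massFun Z w.2.2

theorem condProdMass_nonneg (X : Ω → A) (Y : Ω → B) (Z : Ω → C) (w : A × B × C) :
    0 ≤ condProdMass X Y Z w :=
  div_nonneg (mul_nonneg (massFun_nonneg _ _) (massFun_nonneg _ _)) (massFun_nonneg _ _)

variable [IsFiniteMeasure (ℙ : Measure Ω)] {X : Ω → A} {Y : Ω → B} {Z : Ω → C}

theorem massFun_marginals_pos {w : A × B × C}
    (hw : 0 < massFun (fun ω => (X ω, Y ω, Z ω)) w) :
    0 < massFun (fun ω => (X ω, Z ω)) (w.1, w.2.2) ∧
      0 < massFun (fun ω => (Y ω, Z ω)) w.2 ∧ 0 < massFun Z w.2.2 :=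
  ⟨hw.trans_le (massFun_le_massFun_comp _ (fun v => (v.1, v.2.2)) w),
    hw.trans_le (massFun_le_massFun_comp _ (fun v => v.2) w),
    hw.trans_le (massFun_le_massFun_comp _ (fun v => v.2.2) w)⟩

theorem condProdMass_pos {w : A × B × C} (hw : 0 < massFun (fun ω => (X ω, Y ω, Z ω)) w) :
    0 < condProdMass X Y Z w :=
  have ⟨hXZ, hYZ, hZ⟩ := massFun_marginals_pos hw
  div_pos (mul_pos hXZ hYZ) hZ

theorem log_condProdMass {w : A × B × C} (hw : 0 < massFun (fun ω => (X ω, Y ω, Z ω)) w) :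
    Real.log (condProdMass X Y Z w) =
      Real.log (massFun (fun ω => (X ω, Z ω)) (w.1, w.2.2)) +
        Real.log (massFun (fun ω => (Y ω, Z ω)) w.2) - Real.log (massFun Z w.2.2) := by
  obtain ⟨hXZ, hYZ, hZ⟩ := massFun_marginals_pos hw
  rw [condProdMass, Real.log_div (mul_pos hXZ hYZ).ne' hZ.ne', Real.log_mul hXZ.ne' hYZ.ne']

variable [MeasurableSpace A] [MeasurableSingletonClass A] [MeasurableSpace B]
  [MeasurableSingletonClass B] [MeasurableSpace C] [MeasurableSingletonClass C]

theorem sum_condProdMass [Fintype A] [Fintype B] [Fintype C]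
    (hX : Measurable X) (hY : Measurable Y) (hZ : Measurable Z) :
    ∑ w, condProdMass X Y Z w = Measure.real ℙ (Set.univ : Set Ω) := by
  have hYZ (v : B × C) (hv : massFun Z v.2 = 0) : massFun (fun ω => (Y ω, Z ω)) v = 0 :=
    le_antisymm (hv ▸ massFun_le_massFun_comp _ Prod.snd v) (massFun_nonneg _ _)
  calc ∑ w, condProdMass X Y Z w
      = ∑ v : B × C, (∑ x, massFun (fun ω => (X ω, Z ω)) (x, v.2)) *
          massFun (fun ω => (Y ω, Z ω)) v / massFun Z v.2 := by
        rw [Fintype.sum_prod_type, Finset.sum_comm]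
        simp only [condProdMass, Finset.sum_mul, Finset.sum_div]
    _ = ∑ v, massFun (fun ω => (Y ω, Z ω)) v := by
        simp only [sum_massFun_prodMk hX hZ]
        exact Finset.sum_congr rfl fun v _ => mul_div_cancel_left_of_imp (hYZ v)
    _ = Measure.real ℙ (Set.univ : Set Ω) := sum_massFun (hY.prodMk hZ)

theorem massFun_eq_condProdMass_of_indepFun (hZ : Measurable Z)
    (hXY : ∀ z, ℙ (Z ⁻¹' {z}) ≠ 0 → X ⟂ᵢ[ℙ[|Z ⁻¹' {z}]] Y) (w : A × B × C) :
    massFun (fun ω => (X ω, Y ω, Z ω)) w = condProdMass X Y Z w := by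
  obtain ⟨x, y, z⟩ := w
  have hassoc : massFun (fun ω => (X ω, Y ω, Z ω)) (x, y, z) =
      massFun (fun ω => ((X ω, Y ω), Z ω)) ((x, y), z) :=
    massFun_comp_of_injective (fun ω => ((X ω, Y ω), Z ω)) (Equiv.prodAssoc A B C).injective
      ((x, y), z)
  rw [hassoc, condProdMass, massFun_prodMk_eq_cond_mul _ hZ, massFun_prodMk_eq_cond_mul X hZ,
    massFun_prodMk_eq_cond_mul Y hZ]
  rcases eq_or_ne (ℙ (Z ⁻¹' {z})) 0 with hz | hz
  · simp only [massFun, hz, ENNReal.toReal_zero, mul_zero, div_zero]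
  · rw [← Set.singleton_prod_singleton, Set.mk_preimage_prod,
      (hXY z hz).measure_inter_preimage_eq_mul _ _ (measurableSet_singleton x)
        (measurableSet_singleton y), ENNReal.toReal_mul]
    have hz' : massFun Z z ≠ 0 := ENNReal.toReal_ne_zero.2 ⟨hz, measure_ne_top _ _⟩
    field_simp

end CondProdMass

theorem sub_le_mul_log_sub_log {p q : ℝ} (hp : 0 ≤ p) (hq : 0 ≤ q) (hpq : 0 < p → 0 < q) :
    p - q ≤ p * (Real.log p - Real.log q) := by
  rcases hp.eq_or_lt with rfl | hp
  · simpa only [zero_sub, zero_mul, neg_nonpos] using hq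
  have hq := hpq hp
  calc p - q = p * (1 - (p / q)⁻¹) := by field_simp
    _ ≤ p * Real.log (p / q) :=
        mul_le_mul_of_nonneg_left (Real.one_sub_inv_le_log_of_pos (div_pos hp hq)) hp.le
    _ = p * (Real.log p - Real.log q) := by rw [Real.log_div hp.ne' hq.ne']

section CondMutualInfo

variable {Ω : Type*} [MeasureSpace Ω] [IsFiniteMeasure (ℙ : Measure Ω)] {A B C : Type*}
  [MeasurableSpace A] [MeasurableSingletonClass A] [MeasurableSpace B]
  [MeasurableSingletonClass B] [MeasurableSpace C] [MeasurableSingletonClass C]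
  {X : Ω → A} {Y : Ω → B} {Z : Ω → C}

theorem condMutualInfo_eq_sum_mul_log [Fintype A] [Fintype B] [Fintype C]
    (hX : Measurable X) (hY : Measurable Y) (hZ : Measurable Z) :
    condMutualInfo X Y Z = ∑ w, massFun (fun ω => (X ω, Y ω, Z ω)) w *
      (Real.log (massFun (fun ω => (X ω, Y ω, Z ω)) w) - Real.log (condProdMass X Y Z w)) := by
  have hW : Measurable fun ω => (X ω, Y ω, Z ω) := hX.prodMk (hY.prodMk hZ)
  rw [condMutualInfo, shannonEntropy_comp_eq_neg_sum hW (fun w => (w.1, w.2.2)),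
    shannonEntropy_comp_eq_neg_sum hW (fun w => w.2),
    shannonEntropy_comp_eq_neg_sum hW (fun w => w),
    shannonEntropy_comp_eq_neg_sum hW (fun w => w.2.2)]
  simp only [← Finset.sum_neg_distrib, ← Finset.sum_add_distrib, ← Finset.sum_sub_distrib]
  refine Finset.sum_congr rfl fun w _ => ?_
  rcases (massFun_nonneg (fun ω => (X ω, Y ω, Z ω)) w).eq_or_lt with hw | hw
  · simp only [← hw, zero_mul, neg_zero, add_zero, sub_zero]
  · rw [log_condProdMass hw]
    ring

theorem condMutualInfo_nonneg [Finite A] [Finite B] [Finite C]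
    (hX : Measurable X) (hY : Measurable Y) (hZ : Measurable Z) : 0 ≤ condMutualInfo X Y Z := by
  have := Fintype.ofFinite A
  have := Fintype.ofFinite B
  have := Fintype.ofFinite C
  calc 0 = ∑ w, (massFun (fun ω => (X ω, Y ω, Z ω)) w - condProdMass X Y Z w) := by
        rw [Finset.sum_sub_distrib, sum_massFun (hX.prodMk (hY.prodMk hZ)),
          sum_condProdMass hX hY hZ, sub_self]
    _ ≤ ∑ w, massFun (fun ω => (X ω, Y ω, Z ω)) w *
          (Real.log (massFun (fun ω => (X ω, Y ω, Z ω)) w) - Real.log (condProdMass X Y Z w)) :=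
        Finset.sum_le_sum fun w _ => sub_le_mul_log_sub_log (massFun_nonneg _ w)
          (condProdMass_nonneg X Y Z w) condProdMass_pos
    _ = condMutualInfo X Y Z := (condMutualInfo_eq_sum_mul_log hX hY hZ).symm

theorem condMutualInfo_eq_zero_of_indepFun [Finite A] [Finite B] [Finite C]
    (hX : Measurable X) (hY : Measurable Y) (hZ : Measurable Z)
    (hXY : ∀ z, ℙ (Z ⁻¹' {z}) ≠ 0 → X ⟂ᵢ[ℙ[|Z ⁻¹' {z}]] Y) : condMutualInfo X Y Z = 0 := by
  have := Fintype.ofFinite A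
  have := Fintype.ofFinite B
  have := Fintype.ofFinite C
  rw [condMutualInfo_eq_sum_mul_log hX hY hZ]
  refine Finset.sum_eq_zero fun w _ => ?_
  rw [massFun_eq_condProdMass_of_indepFun hZ hXY, sub_self, mul_zero]

end CondMutualInfo

section ChainRule

variable {Ω : Type*} [MeasureSpace Ω] {A B C E : Type*}

theorem condMutualInfo_eq_condEntropy_sub (X : Ω → A) (Y : Ω → B) (Z : Ω → C) :
    condMutualInfo X Y Z = condEntropy X Z - condEntropy X (fun ω => (Y ω, Z ω)) := by
  unfold condMutualInfo condEntropy
  ring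

theorem condEntropy_comp_right_of_injective (X : Ω → A) (Z : Ω → C) {f : C → E}
    (hf : Function.Injective f) : condEntropy X (fun ω => f (Z ω)) = condEntropy X Z :=
  congrArg₂ (· - ·)
    (shannonEntropy_comp_of_injective (fun ω => (X ω, Z ω)) (Function.injective_id.prodMap hf))
    (shannonEntropy_comp_of_injective Z hf)

theorem condMutualInfo_comp_right_of_injective (Y : Ω → B) (X : Ω → A) (D : Ω → C) {f : A → E}
    (hf : Function.Injective f) :
    condMutualInfo Y (fun ω => f (X ω)) D = condMutualInfo Y X D := by
  have hXD : shannonEntropy (fun ω => (f (X ω), D ω)) = shannonEntropy (fun ω => (X ω, D ω)) :=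
    shannonEntropy_comp_of_injective (fun ω => (X ω, D ω)) (hf.prodMap Function.injective_id)
  have hYXD : shannonEntropy (fun ω => (Y ω, f (X ω), D ω)) =
      shannonEntropy (fun ω => (Y ω, X ω, D ω)) :=
    shannonEntropy_comp_of_injective (fun ω => (Y ω, X ω, D ω))
      (Function.injective_id.prodMap (hf.prodMap Function.injective_id))
  rw [condMutualInfo, hXD, hYXD, condMutualInfo]

theorem condMutualInfo_prodMk_sub (Y : Ω → B) (U : Ω → A) (V : Ω → E) (D : Ω → C) :
    condMutualInfo Y (fun ω => (U ω, V ω)) D - condMutualInfo Y V D =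
      condEntropy U (fun ω => (V ω, D ω)) - condEntropy U (fun ω => (V ω, Y ω, D ω)) := by
  have hUVD : shannonEntropy (fun ω => (U ω, V ω, D ω)) =
      shannonEntropy (fun ω => ((U ω, V ω), D ω)) :=
    shannonEntropy_comp_of_injective (fun ω => ((U ω, V ω), D ω)) (Equiv.prodAssoc A E C).injective
  have hVYD : shannonEntropy (fun ω => (V ω, Y ω, D ω)) =
      shannonEntropy (fun ω => (Y ω, V ω, D ω)) :=
    shannonEntropy_comp_of_injective (fun ω => (Y ω, V ω, D ω))
      (f := fun p => (p.2.1, p.1, p.2.2))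
      (Function.LeftInverse.injective (g := fun q => (q.2.1, q.1, q.2.2)) fun _ => rfl)
  have hUVYD : shannonEntropy (fun ω => (U ω, V ω, Y ω, D ω)) =
      shannonEntropy (fun ω => (Y ω, (U ω, V ω), D ω)) :=
    shannonEntropy_comp_of_injective (fun ω => (Y ω, (U ω, V ω), D ω))
      (f := fun p => (p.2.1.1, p.2.1.2, p.1, p.2.2))
      (Function.LeftInverse.injective (g := fun q => (q.2.2.1, (q.1, q.2.1), q.2.2.2))
        fun _ => rfl)
  unfold condMutualInfo condEntropy
  rw [hUVD, hVYD, hUVYD]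
  ring

end ChainRule

section CondEntropy

variable {Ω : Type*} [MeasureSpace Ω] [IsFiniteMeasure (ℙ : Measure Ω)] {A B C E : Type*}
  [Finite A] [Finite B] [Finite C]
  [MeasurableSpace A] [MeasurableSingletonClass A] [MeasurableSpace B]
  [MeasurableSingletonClass B] [MeasurableSpace C] [MeasurableSingletonClass C]

theorem condEntropy_le_condEntropy_comp {X : Ω → A} {Z : Ω → C} (hX : Measurable X)
    (hZ : Measurable Z) (f : C → B) : condEntropy X Z ≤ condEntropy X (fun ω => f (Z ω)) := by
  have hgraph : condEntropy X (fun ω => (Z ω, f (Z ω))) = condEntropy X Z :=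
    condEntropy_comp_right_of_injective X Z (f := fun c => (c, f c))
      (Function.LeftInverse.injective (g := Prod.fst) fun _ => rfl)
  rw [← hgraph, ← sub_nonneg, ← condMutualInfo_eq_condEntropy_sub]
  exact condMutualInfo_nonneg hX hZ ((measurable_of_finite f).comp hZ)

theorem condEntropy_prodMk_eq_of_indepFun {X : Ω → A} {Y : Ω → B} {Z : Ω → C}
    (hX : Measurable X) (hY : Measurable Y) (hZ : Measurable Z)
    (hXY : ∀ z, ℙ (Z ⁻¹' {z}) ≠ 0 → X ⟂ᵢ[ℙ[|Z ⁻¹' {z}]] Y) :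
    condEntropy X (fun ω => (Y ω, Z ω)) = condEntropy X Z := by
  rw [eq_comm, ← sub_eq_zero, ← condMutualInfo_eq_condEntropy_sub]
  exact condMutualInfo_eq_zero_of_indepFun hX hY hZ hXY

theorem condMutualInfo_prodMk_sub_eq_of_indepFun [Finite E] [MeasurableSpace E]
    [MeasurableSingletonClass E] {Y : Ω → B} {D : Ω → C} {U : Ω → A} {V : Ω → E}
    (hY : Measurable Y) (hD : Measurable D) (hU : Measurable U) (hV : Measurable V)
    (hUV : ∀ z, ℙ ((fun ω => (Y ω, D ω)) ⁻¹' {z}) ≠ 0 →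
      U ⟂ᵢ[ℙ[|(fun ω => (Y ω, D ω)) ⁻¹' {z}]] V) :
    condMutualInfo Y (fun ω => (U ω, V ω)) D - condMutualInfo Y V D =
      condEntropy U (fun ω => (V ω, D ω)) - condEntropy U (fun ω => (Y ω, D ω)) := by
  rw [condMutualInfo_prodMk_sub, condEntropy_prodMk_eq_of_indepFun hU hV (hY.prodMk hD) hUV]

end CondEntropy

section Family

variable {Ω ι : Type*} {A : ι → Type*}

theorem condMutualInfo_insert [MeasureSpace Ω] [DecidableEq ι] {B C : Type*} (Y : Ω → B)
    (X : ∀ j, Ω → A j) (D : Ω → C) (S : Finset ι) (j : ι) :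
    condMutualInfo Y (fun ω (i : {i // i ∈ insert j S}) => X i.1 ω) D =
      condMutualInfo Y (fun ω => (X j ω, fun i : {i // i ∈ S} => X i.1 ω)) D := by
  let split (x : ∀ i : {i // i ∈ insert j S}, A i.1) : A j × ∀ i : {i // i ∈ S}, A i.1 :=
    (x ⟨j, Finset.mem_insert_self j S⟩, fun i => x ⟨i.1, Finset.mem_insert_of_mem i.2⟩)
  have hsplit : Function.Injective split := by
    intro x x' h
    funext ⟨i, hi⟩
    rcases Finset.mem_insert.1 hi with rfl | hiS
    · exact congrArg Prod.fst h
    · exact congrFun (congrArg Prod.snd h) ⟨i, hiS⟩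
  exact (condMutualInfo_comp_right_of_injective Y _ D hsplit).symm

variable [∀ j, MeasurableSpace (A j)] {X : ∀ j, Ω → A j}

theorem indepFun_finset_of_notMem [MeasurableSpace Ω] {μ : Measure Ω} (hXi : iIndepFun X μ)
    (hX : ∀ j, Measurable (X j)) {S : Finset ι} {j : ι} (hj : j ∉ S) :
    X j ⟂ᵢ[μ] fun ω (i : {i // i ∈ S}) => X i.1 ω :=
  (hXi.indepFun_finset {j} S (Finset.disjoint_singleton_left.2 hj) hX).comp
    (φ := fun x : ∀ i : {i // i ∈ ({j} : Finset ι)}, A i.1 => x ⟨j, Finset.mem_singleton_self j⟩)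
    (measurable_pi_apply _) measurable_id

variable [∀ j, MeasurableSingletonClass (A j)]

theorem iIndepFun_of_measure_eq_prod [MeasurableSpace Ω] {μ : Measure Ω} [IsProbabilityMeasure μ]
    [∀ j, Countable (A j)] (hX : ∀ j, Measurable (X j))
    (hprod : ∀ (S : Finset ι) (x : ∀ i : {i // i ∈ S}, A i.1),
      μ {ω | ∀ i : {i // i ∈ S}, X i.1 ω = x i} = ∏ i : {i // i ∈ S}, μ {ω | X i.1 ω = x i}) :
    iIndepFun X μ := by
  refine iIndepFun_iff_finset.2 fun S => ?_
  have hXS (i : {i // i ∈ S}) : AEMeasurable (S.restrict X i) μ := (hX i.1).aemeasurable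
  rw [iIndepFun_iff_map_fun_eq_pi_map hXS]
  have (i : {i // i ∈ S}) := Measure.isProbabilityMeasure_map (hXS i)
  refine Measure.ext_of_singleton fun x => ?_
  calc Measure.map (fun ω i => S.restrict X i ω) μ {x}
      = μ ((fun ω i => S.restrict X i ω) ⁻¹' {x}) :=
        Measure.map_apply (measurable_pi_lambda _ fun i => hX i.1) (measurableSet_singleton x)
    _ = μ {ω | ∀ i : {i // i ∈ S}, X i.1 ω = x i} :=
        congrArg μ (Set.ext fun ω => funext_iff)
    _ = ∏ i : {i // i ∈ S}, Measure.map (S.restrict X i) μ {x i} := by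
        rw [hprod S x]
        exact Finset.prod_congr rfl fun i _ =>
          (Measure.map_apply (hX i.1) (measurableSet_singleton (x i))).symm
    _ = Measure.pi (fun i => Measure.map (S.restrict X i) μ) {x} :=
        (Measure.pi_singleton _ x).symm

theorem difficulty_aware_submodular_general [MeasureSpace Ω] [IsFiniteMeasure (ℙ : Measure Ω)]
    [DecidableEq ι] {B C : Type*} [Finite B] [Finite C] [∀ j, Finite (A j)]
    [MeasurableSpace B] [MeasurableSingletonClass B]
    [MeasurableSpace C] [MeasurableSingletonClass C] {Y : Ω → B} {D : Ω → C}
    (hY : Measurable Y) (hD : Measurable D) (hX : ∀ j, Measurable (X j))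
    (hXi : ∀ y d, ℙ ({ω | Y ω = y} ∩ {ω | D ω = d}) ≠ 0 →
      iIndepFun X ℙ[|{ω | Y ω = y} ∩ {ω | D ω = d}])
    (S T : Finset ι) (j : ι) (hST : S ⊆ T) (hj : j ∉ T) :
    condMutualInfo Y (fun ω (i : {i // i ∈ insert j T}) => X i.1 ω) D
        - condMutualInfo Y (fun ω (i : {i // i ∈ T}) => X i.1 ω) D
      ≤ condMutualInfo Y (fun ω (i : {i // i ∈ insert j S}) => X i.1 ω) D
        - condMutualInfo Y (fun ω (i : {i // i ∈ S}) => X i.1 ω) D := by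
  have hfam (R : Finset ι) : Measurable fun ω (i : {i // i ∈ R}) => X i.1 ω :=
    measurable_pi_lambda _ fun i => hX i.1
  have hincr (R : Finset ι) (hjR : j ∉ R) :=
    condMutualInfo_prodMk_sub_eq_of_indepFun hY hD (hX j) (hfam R) fun (y, d) hyd => by
      rw [← Set.singleton_prod_singleton, Set.mk_preimage_prod] at hyd ⊢
      exact indepFun_finset_of_notMem (hXi y d hyd) hX hjR
  simp only [condMutualInfo_insert]
  rw [hincr T hj, hincr S fun hjS => hj (hST hjS)]
  exact sub_le_sub_right (condEntropy_le_condEntropy_comp (hX j) ((hfam T).prodMk hD)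
    fun p => (fun i : {i // i ∈ S} => p.1 ⟨i.1, hST i.2⟩, p.2)) _

end Family

/-- **Submodularity of the difficulty-aware information.**
Let `Y, D, X₁,…,X_m` be random variables with finite ranges such that for every subset
`S` the variables `(X_j)_{j∈S}` are conditionally independent given `(Y,D)`.  Then
`F(S) = I(Y; X_S | D)` is submodular: for all `S ⊆ T` and `j ∉ T`,
`F(S ∪ {j}) - F(S) ≥ F(T ∪ {j}) - F(T)`. -/
theorem difficulty_aware_submodular
    {Ω : Type*} [MeasureSpace Ω] [IsProbabilityMeasure (ℙ : Measure Ω)]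
    {m : ℕ} {B C : Type*} [Fintype B] [Fintype C]
    [MeasurableSpace B] [MeasurableSingletonClass B]
    [MeasurableSpace C] [MeasurableSingletonClass C]
    {A : Fin m → Type*} [∀ j, Fintype (A j)]
    [∀ j, MeasurableSpace (A j)] [∀ j, MeasurableSingletonClass (A j)]
    (Y : Ω → B) (D : Ω → C) (X : ∀ j, Ω → A j)
    (hYm : Measurable Y) (hDm : Measurable D) (hXm : ∀ j, Measurable (X j))
    (hci : ∀ (S : Finset (Fin m)) (x : ∀ i : {i : Fin m // i ∈ S}, A i.1) (y : B) (d : C),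
      ℙ ({ω | Y ω = y} ∩ {ω | D ω = d}) ≠ 0 →
      (ℙ[|{ω | Y ω = y} ∩ {ω | D ω = d}])
          {ω | ∀ i : {i : Fin m // i ∈ S}, X i.1 ω = x i}
        = ∏ i : {i : Fin m // i ∈ S},
            (ℙ[|{ω | Y ω = y} ∩ {ω | D ω = d}]) {ω | X i.1 ω = x i}) :
    ∀ (S T : Finset (Fin m)) (j : Fin m), S ⊆ T → j ∉ T →
      condMutualInfo Y (fun ω => fun i : {i : Fin m // i ∈ insert j T} => X i.1 ω) D
          - condMutualInfo Y (fun ω => fun i : {i : Fin m // i ∈ T} => X i.1 ω) D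
        ≤ condMutualInfo Y (fun ω => fun i : {i : Fin m // i ∈ insert j S} => X i.1 ω) D
          - condMutualInfo Y (fun ω => fun i : {i : Fin m // i ∈ S} => X i.1 ω) D := by
  refine difficulty_aware_submodular_general hYm hDm hXm fun y d hyd => ?_
  have := cond_isProbabilityMeasure hyd
  exact iIndepFun_of_measure_eq_prod hXm fun S x => hci S x y d hyd
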